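/- Let B be a noetherian algebra, Q a finitely generated projective left B-module, and P a B-submodule of Q such that Q/P is finite dimensional over k. Then P is almost flat: for every injective morphism f : X → Y of finitely generated right B-modules, the kernel of f ⊗_B P : X ⊗_B P → Y ⊗_B P is finite dimensional. -/

import Mathlib

open TensorProduct MulOpposite

/-- The `k`-subspace of `N ⊗[k] P` spanned by the balancing relations
`(n·b) ⊗ p − n ⊗ (b·p)`, used to define the tensor product `N ⊗_B P` of a right
`B`-module `N` and a left `B`-module `P` over a (noncommutative) `k`-algebra `B`. -/
def balRel (k B : Type) [Field k] [Ring B] [Algebra k B]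
    (N P : Type) [AddCommGroup N] [Module Bᵐᵒᵖ N] [Module k N] [IsScalarTower k Bᵐᵒᵖ N]
    [AddCommGroup P] [Module B P] [Module k P] [IsScalarTower k B P] :
    Submodule k (N ⊗[k] P) :=
  Submodule.span k {x | ∃ (n : N) (b : B) (p : P),
    x = (op b • n) ⊗ₜ[k] p - n ⊗ₜ[k] (b • p)}

/-- The tensor product `N ⊗_B P` of a right `B`-module `N` and a left `B`-module `P`,
realized as the quotient of `N ⊗[k] P` by the balancing relations. -/
abbrev TensorB (k B : Type) [Field k] [Ring B] [Algebra k B]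
    (N P : Type) [AddCommGroup N] [Module Bᵐᵒᵖ N] [Module k N] [IsScalarTower k Bᵐᵒᵖ N]
    [AddCommGroup P] [Module B P] [Module k P] [IsScalarTower k B P] :=
  (N ⊗[k] P) ⧸ balRel k B N P

/-- The map `f ⊗_B P : N ⊗_B P → N' ⊗_B P` induced by a morphism of right `B`-modules
`f : N → N'`. -/
noncomputable def tensorMapB (k B : Type) [Field k] [Ring B] [Algebra k B]
    (N N' P : Type) [AddCommGroup N] [Module Bᵐᵒᵖ N] [Module k N] [IsScalarTower k Bᵐᵒᵖ N]
    [AddCommGroup N'] [Module Bᵐᵒᵖ N'] [Module k N'] [IsScalarTower k Bᵐᵒᵖ N']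
    [AddCommGroup P] [Module B P] [Module k P] [IsScalarTower k B P]
    (f : N →ₗ[Bᵐᵒᵖ] N') : TensorB k B N P →ₗ[k] TensorB k B N' P :=
  Submodule.mapQ _ _ (TensorProduct.map (f.restrictScalars k) LinearMap.id) (by
    rw [balRel, Submodule.span_le]
    rintro _ ⟨n, b, p, rfl⟩
    simp only [SetLike.mem_coe, Submodule.mem_comap, map_sub, TensorProduct.map_tmul,
      LinearMap.coe_restrictScalars, LinearMap.id_coe, id_eq, map_smul]
    exact Submodule.subset_span ⟨f n, b, p, rfl⟩)

/-!
Tensoring `X → Y` with the inclusion `P → Q` gives a commutative square, so the kernel of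
`X ⊗_B P → Y ⊗_B P` lies in the kernel of `X ⊗_B P → X ⊗_B Q → Y ⊗_B Q`. Since `Q` is flat, it
suffices to bound the kernel of `X ⊗_B P → X ⊗_B Q`, which is the image of `Tor₁(X, Q/P)`. For a
finite presentation `B^m → B^n → X → 0`, the snake lemma presents that image as a quotient of a
subspace of `B^m ⊗_B (Q/P) ≅ (Q/P)^m`, which is finite-dimensional.
-/

namespace TensorB

variable (k B : Type) [Field k] [Ring B] [Algebra k B]
  (N N' : Type) [AddCommGroup N] [Module Bᵐᵒᵖ N] [Module k N] [IsScalarTower k Bᵐᵒᵖ N]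
  [AddCommGroup N'] [Module Bᵐᵒᵖ N'] [Module k N'] [IsScalarTower k Bᵐᵒᵖ N']
  (M M' : Type) [AddCommGroup M] [Module B M] [Module k M] [IsScalarTower k B M]
  [AddCommGroup M'] [Module B M'] [Module k M'] [IsScalarTower k B M']
  {V : Type*} [AddCommGroup V] [Module k V]

/-- The canonical balanced bilinear map `(n, m) ↦ n ⊗ m` into `N ⊗_B M`, the analogue of
`TensorProduct.mk`. -/
def mk : N →ₗ[k] M →ₗ[k] TensorB k B N M :=
  (TensorProduct.mk k N M).compr₂ (balRel k B N M).mkQ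

variable {N N' M M'}

theorem mk_op_smul (n : N) (b : B) (m : M) : mk k B N M (op b • n) m = mk k B N M n (b • m) :=
  (Submodule.Quotient.eq _).2 (Submodule.subset_span ⟨n, b, m, rfl⟩)

variable {k B}

theorem hom_ext {f g : TensorB k B N M →ₗ[k] V}
    (h : ∀ n m, f (mk k B N M n m) = g (mk k B N M n m)) : f = g :=
  Submodule.linearMap_qext _ (TensorProduct.ext' h)

/-- The linear map out of `N ⊗_B M` induced by a balanced bilinear map, the universal property of
the tensor product. -/
def lift (β : N →ₗ[k] M →ₗ[k] V) (hβ : ∀ n (b : B) m, β (op b • n) m = β n (b • m)) :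
    TensorB k B N M →ₗ[k] V :=
  (balRel k B N M).liftQ (TensorProduct.lift β) <| Submodule.span_le.2 <| by
    rintro _ ⟨n, b, m, rfl⟩
    simp [hβ]

@[simp]
theorem lift_mk (β : N →ₗ[k] M →ₗ[k] V) (hβ : ∀ n (b : B) m, β (op b • n) m = β n (b • m))
    (n : N) (m : M) : lift β hβ (mk k B N M n m) = β n m :=
  TensorProduct.lift.tmul n m

@[simp]
theorem tensorMapB_mk (f : N →ₗ[Bᵐᵒᵖ] N') (n : N) (m : M) :
    tensorMapB k B N N' M f (mk k B N M n m) = mk k B N' M (f n) m :=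
  rfl

variable (k N) in
/-- The map `N ⊗_B g : N ⊗_B M → N ⊗_B M'` induced by a morphism of left `B`-modules `g`, the
counterpart of `tensorMapB` in the second variable. -/
def lTensor (g : M →ₗ[B] M') : TensorB k B N M →ₗ[k] TensorB k B N M' :=
  (balRel k B N M).mapQ (balRel k B N M') ((g.restrictScalars k).lTensor N) <|
    Submodule.span_le.2 <| by
      rintro _ ⟨n, b, m, rfl⟩
      exact Submodule.subset_span ⟨n, b, g m, by simp⟩

@[simp]
theorem lTensor_mk (g : M →ₗ[B] M') (n : N) (m : M) :
    lTensor k N g (mk k B N M n m) = mk k B N M' n (g m) :=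
  rfl

theorem lTensor_comp_tensorMapB (f : N →ₗ[Bᵐᵒᵖ] N') (g : M →ₗ[B] M') :
    lTensor k N' g ∘ₗ tensorMapB k B N N' M f = tensorMapB k B N N' M' f ∘ₗ lTensor k N g :=
  hom_ext fun _ _ => rfl

theorem balRel_le_map_rTensor {p : N →ₗ[Bᵐᵒᵖ] N'} (hp : Function.Surjective p) :
    balRel k B N' M ≤ (balRel k B N M).map ((p.restrictScalars k).rTensor M) := by
  refine Submodule.span_le.2 ?_
  rintro _ ⟨n', b, m, rfl⟩
  obtain ⟨n, rfl⟩ := hp n'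
  exact ⟨_, Submodule.subset_span ⟨n, b, m, rfl⟩, by simp⟩

theorem balRel_le_map_lTensor {g : M →ₗ[B] M'} (hg : Function.Surjective g) :
    balRel k B N M' ≤ (balRel k B N M).map ((g.restrictScalars k).lTensor N) := by
  refine Submodule.span_le.2 ?_
  rintro _ ⟨n, b, m', rfl⟩
  obtain ⟨m, rfl⟩ := hg m'
  exact ⟨_, Submodule.subset_span ⟨n, b, m, rfl⟩, by simp⟩

theorem tensorMapB_surjective {p : N →ₗ[Bᵐᵒᵖ] N'} (hp : Function.Surjective p) :
    Function.Surjective (tensorMapB k B N N' M p) :=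
  .of_comp (g := (balRel k B N M).mkQ) <|
    (Submodule.mkQ_surjective _).comp (LinearMap.rTensor_surjective M (g := p.restrictScalars k) hp)

theorem lTensor_surjective {g : M →ₗ[B] M'} (hg : Function.Surjective g) :
    Function.Surjective (lTensor k N g) :=
  .of_comp (g := (balRel k B N M).mkQ) <|
    (Submodule.mkQ_surjective _).comp (LinearMap.lTensor_surjective N (g := g.restrictScalars k) hg)

theorem tensorMapB_exact {L : Type} [AddCommGroup L] [Module Bᵐᵒᵖ L] [Module k L]
    [IsScalarTower k Bᵐᵒᵖ L] {r : L →ₗ[Bᵐᵒᵖ] N} {p : N →ₗ[Bᵐᵒᵖ] N'} (hrp : Function.Exact r p)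
    (hp : Function.Surjective p) :
    Function.Exact (tensorMapB k B L N M r) (tensorMapB k B N N' M p) :=
  ((rTensor_exact M (f := r.restrictScalars k) (g := p.restrictScalars k) hrp hp).exact_mapQ_iff
    _ _).2 (inf_le_right.trans (balRel_le_map_rTensor hp))

theorem lTensor_exact {L : Type} [AddCommGroup L] [Module B L] [Module k L]
    [IsScalarTower k B L] {h : L →ₗ[B] M} {g : M →ₗ[B] M'} (hhg : Function.Exact h g)
    (hg : Function.Surjective g) :
    Function.Exact (lTensor k N h) (lTensor k N g) :=
  ((_root_.lTensor_exact N (f := h.restrictScalars k) (g := g.restrictScalars k)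
    hhg hg).exact_mapQ_iff _ _).2 (inf_le_right.trans (balRel_le_map_lTensor hg))

variable (k B M) in
/-- The isomorphism `B^ι ⊗_B M ≅ M^ι`, the analogue of `TensorProduct.piScalarRight` with the free
module on the left. -/
def piScalarLeft (ι : Type) [Fintype ι] [DecidableEq ι] :
    TensorB k B (ι → Bᵐᵒᵖ) M ≃ₗ[k] (ι → M) :=
  LinearEquiv.ofLinearMap
    (lift (LinearMap.mk₂ k (fun (x : ι → Bᵐᵒᵖ) (m : M) i => unop (x i) • m)
      (fun _ _ _ => by ext; simp [add_smul]) (fun _ _ _ => by ext; simp)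
      (fun _ _ _ => by ext; simp) (fun c x m => by ext; simp [smul_comm c]))
      (fun x b m => by ext; simp [mul_smul]))
    (LinearMap.lsum k (fun _ : ι => M) k fun i => mk k B (ι → Bᵐᵒᵖ) M (Pi.single i 1))
    (by ext i m j; simp [Pi.single_apply, apply_ite unop])
    (hom_ext fun x m => by
      simp [← mk_op_smul, ← LinearMap.sum_apply, ← map_sum, ← pi_eq_sum_univ'])

@[simp]
theorem piScalarLeft_mk {ι : Type} [Fintype ι] [DecidableEq ι] (x : ι → Bᵐᵒᵖ) (m : M) :
    piScalarLeft k B M ι (mk k B _ M x m) = fun i => unop (x i) • m :=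
  rfl

variable (k B N) in
/-- The isomorphism `N ⊗_B B^(I) ≅ N^(I)`, the analogue of `TensorProduct.finsuppScalarRight`. -/
noncomputable def finsuppScalarRight (I : Type) : TensorB k B N (I →₀ B) ≃ₗ[k] (I →₀ N) :=
  LinearEquiv.ofLinearMap
    (lift (LinearMap.mk₂ k
      (fun (n : N) (g : I →₀ B) => g.mapRange (fun b => op b • n) (by simp))
      (fun _ _ _ => by ext; simp) (fun c _ _ => by ext; simp [smul_comm c])
      (fun _ _ _ => by ext; simp [add_smul]) (fun _ _ _ => by ext; simp))
      (fun n b g => by ext; simp [mul_smul]))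
    (Finsupp.lsum k fun i => (mk k B N (I →₀ B)).flip (Finsupp.single i 1))
    (by ext; simp)
    (hom_ext fun n g => by
      induction g using Finsupp.induction_linear with
      | zero => simp
      | add g h ihg ihh => simp only [map_add, ihg, ihh]
      | single i b => simp [mk_op_smul])

@[simp]
theorem finsuppScalarRight_mk {I : Type} (n : N) (g : I →₀ B) :
    finsuppScalarRight k B N I (mk k B N _ n g) = g.mapRange (fun b => op b • n) (by simp) :=
  rfl

theorem tensorMapB_finsupp_injective (I : Type) {f : N →ₗ[Bᵐᵒᵖ] N'} (hf : Function.Injective f) :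
    Function.Injective (tensorMapB k B N N' (I →₀ B) f) := by
  have naturality : (finsuppScalarRight k B N' I).toLinearMap ∘ₗ tensorMapB k B N N' (I →₀ B) f =
      Finsupp.mapRange.linearMap (f.restrictScalars k) ∘ₗ
        (finsuppScalarRight k B N I).toLinearMap :=
    hom_ext fun n g => by ext; simp
  refine .of_comp (f := finsuppScalarRight k B N' I) ?_
  rw [← LinearEquiv.coe_toLinearMap, ← LinearMap.coe_comp, naturality]
  exact (Finsupp.mapRange_injective f (map_zero f) hf).comp (LinearEquiv.injective _)

theorem tensorMapB_injective_of_projective [Module.Projective B M] {f : N →ₗ[Bᵐᵒᵖ] N'}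
    (hf : Function.Injective f) : Function.Injective (tensorMapB k B N N' M f) := by
  obtain ⟨s, hs⟩ := Module.projective_def'.1 ‹Module.Projective B M›
  have retraction : lTensor k N (Finsupp.linearCombination B id) ∘ₗ lTensor k N s = .id :=
    hom_ext fun n m => congrArg (mk k B N M n) (LinearMap.congr_fun hs m)
  refine .of_comp (f := lTensor k N' s) ?_
  rw [← LinearMap.coe_comp, lTensor_comp_tensorMapB]
  exact (tensorMapB_finsupp_injective M hf).comp
    (LinearMap.injective_of_comp_eq_id _ _ retraction)

theorem lTensor_pi_injective (ι : Type) [Finite ι] {g : M →ₗ[B] M'} (hg : Function.Injective g) :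
    Function.Injective (lTensor k (ι → Bᵐᵒᵖ) g) := by
  classical
  have := Fintype.ofFinite ι
  have naturality : (piScalarLeft k B M' ι).toLinearMap ∘ₗ lTensor k (ι → Bᵐᵒᵖ) g =
      (g.restrictScalars k).compLeft ι ∘ₗ (piScalarLeft k B M ι).toLinearMap :=
    hom_ext fun x m => by ext; simp
  refine .of_comp (f := piScalarLeft k B M' ι) ?_
  rw [← LinearEquiv.coe_toLinearMap, ← LinearMap.coe_comp, naturality]
  exact hg.comp_left.comp (LinearEquiv.injective _)

theorem finiteDimensional_ker_lTensor [Module.FinitePresentation Bᵐᵒᵖ N] {g : M →ₗ[B] M'}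
    (hg : Function.Injective g) [FiniteDimensional k (M' ⧸ LinearMap.range g)] :
    FiniteDimensional k (LinearMap.ker (lTensor k N g)) := by
  obtain ⟨n, m, p, r, hp, hrp⟩ := Module.FinitePresentation.exists_fin' Bᵐᵒᵖ N
  let π := (LinearMap.range g).mkQ
  have hπ : Function.Surjective π := Submodule.mkQ_surjective _
  have hgπ : Function.Exact g π := LinearMap.exact_map_mkQ_range g
  have : FiniteDimensional k (TensorB k B (Fin m → Bᵐᵒᵖ) (M' ⧸ LinearMap.range g)) :=
    .equiv (piScalarLeft k B _ (Fin m)).symm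
  let r' := tensorMapB k B _ _ (M' ⧸ LinearMap.range g) r
  -- The rows are `B^m ⊗_B -` and `B^n ⊗_B -` applied to `M → M' → M' / g(M)`; the first two
  -- columns have cokernels `N ⊗_B M` and `N ⊗_B M'`.
  have connecting_exact := SnakeLemma.exact_δ'_left
    (tensorMapB k B _ _ M r) (tensorMapB k B _ _ M' r) r'
    (lTensor k _ g) (lTensor k _ π) (lTensor_exact hgπ hπ)
    (lTensor k _ g) (lTensor k _ π) (lTensor_exact hgπ hπ)
    (lTensor_comp_tensorMapB r g) (lTensor_comp_tensorMapB r π)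
    (LinearMap.ker r').subtype (LinearMap.exact_subtype_ker_map r')
    (tensorMapB k B _ _ M p) (tensorMapB_exact hrp hp)
    (tensorMapB k B _ _ M' p) (tensorMapB_exact hrp hp)
    (lTensor_surjective hπ) (lTensor_pi_injective _ hg)
    (lTensor k N g) (lTensor_comp_tensorMapB p g) (tensorMapB_surjective hp)
  rw [connecting_exact.linearMap_ker_eq]
  infer_instance

end TensorB

theorem almost_flat_of_cofinite_in_projective_general
    (k B : Type) [Field k] [Ring B] [Algebra k B]
    (Q : Type) [AddCommGroup Q] [Module B Q] [Module k Q] [IsScalarTower k B Q]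
    (P : Submodule B Q) [FiniteDimensional k (Q ⧸ P)]
    (X Y : Type) [AddCommGroup X] [Module Bᵐᵒᵖ X] [Module k X] [IsScalarTower k Bᵐᵒᵖ X]
    [Module.FinitePresentation Bᵐᵒᵖ X]
    [AddCommGroup Y] [Module Bᵐᵒᵖ Y] [Module k Y] [IsScalarTower k Bᵐᵒᵖ Y]
    (f : X →ₗ[Bᵐᵒᵖ] Y) [FiniteDimensional k (LinearMap.ker (tensorMapB k B X Y Q f))] :
    FiniteDimensional k (LinearMap.ker (tensorMapB k B X Y P f)) := by
  have : FiniteDimensional k (Q ⧸ LinearMap.range P.subtype) := by rwa [P.range_subtype]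
  have := TensorB.finiteDimensional_ker_lTensor (k := k) (N := X) P.subtype_injective
  have : FiniteDimensional k
      (LinearMap.ker (tensorMapB k B X Y Q f ∘ₗ TensorB.lTensor k X P.subtype)) := by
    rw [LinearMap.ker_comp]
    infer_instance
  rw [← TensorB.lTensor_comp_tensorMapB] at this
  exact Submodule.finiteDimensional_of_le <| LinearMap.ker_le_ker_comp
    (tensorMapB k B X Y P f) (TensorB.lTensor k Y P.subtype)

/-- Let `B` be a noetherian algebra, `Q` a finitely generated projective left `B`-module,
and `P` a `B`-submodule of `Q` such that `Q/P` is finite-dimensional over `k`.  Then `P` is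
almost flat: for every injective morphism `f : X → Y` of finitely generated right
`B`-modules, the kernel of `f ⊗_B P` is finite-dimensional. -/
theorem almost_flat_of_cofinite_in_projective
    (k B : Type) [Field k] [CharZero k] [Ring B] [Algebra k B]
    [IsNoetherianRing B] [IsNoetherianRing Bᵐᵒᵖ]
    (Q : Type) [AddCommGroup Q] [Module B Q] [Module k Q] [IsScalarTower k B Q]
    [Module.Finite B Q] [Module.Projective B Q]
    (P : Submodule B Q)
    (hcofin : FiniteDimensional k (Q ⧸ (P.restrictScalars k))) :
    ∀ (X Y : Type) [AddCommGroup X] [Module Bᵐᵒᵖ X] [Module k X]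
      [IsScalarTower k Bᵐᵒᵖ X] [Module.Finite Bᵐᵒᵖ X]
      [AddCommGroup Y] [Module Bᵐᵒᵖ Y] [Module k Y]
      [IsScalarTower k Bᵐᵒᵖ Y] [Module.Finite Bᵐᵒᵖ Y]
      (f : X →ₗ[Bᵐᵒᵖ] Y), Function.Injective f →
        FiniteDimensional k (LinearMap.ker (tensorMapB k B X Y (↥P) f)) := by
  intro X Y _ _ _ _ _ _ _ _ _ _ f hf
  have := Module.finitePresentation_of_finite Bᵐᵒᵖ X
  have : FiniteDimensional k (Q ⧸ P) := .equiv (Submodule.Quotient.restrictScalarsEquiv k P)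
  have : FiniteDimensional k (LinearMap.ker (tensorMapB k B X Y Q f)) := by
    rw [LinearMap.ker_eq_bot.2 (TensorB.tensorMapB_injective_of_projective hf)]
    infer_instance
  exact almost_flat_of_cofinite_in_projective_general k B Q P X Y f
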